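/- arXiv:1810.03878 — 2 statements merged into one kernel-verified Lean document; each statement's English description precedes it below -/
import Mathlib

section
/- Let q be odd, 4 ≤ 2k ≤ m and 4 ≤ 2t ≤ m-2. Then W_2(2t,m) < W_{2k}(2t,m), where W_{2j}(2t,m) = #{A skew-symmetric m×m over F_q of rank ≤ 2t : tr(E_{2j}A) ≠ 0}. Consequently, the number of minimum weight codewords in C_A(2t,m) equals (q^m - 1)(q^{m-1} - 1)/(q² - 1). -/
open Matrix
def IsSkewSym {K : Type} [Field K] {m : ℕ} (A : Matrix (Fin m) (Fin m) K) : Prop :=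
  Aᵀ = -A ∧ ∀ i, A i i = 0

def Estd (K : Type) [Field K] (k m : ℕ) : Matrix (Fin m) (Fin m) K :=
  Matrix.of fun i j =>
    if j.val = i.val + 1 ∧ i.val % 2 = 0 ∧ j.val < 2*k then 1
    else if i.val = j.val + 1 ∧ j.val % 2 = 0 ∧ i.val < 2*k then -1 else 0

noncomputable def na (K : Type) [Field K] (r m : ℕ) : ℕ :=
  Nat.card {A : Matrix (Fin m) (Fin m) K // IsSkewSym A ∧ A.rank = r}

noncomputable def Na (K : Type) [Field K] (r m : ℕ) : ℕ :=
  Nat.card {A : Matrix (Fin m) (Fin m) K // IsSkewSym A ∧ A.rank ≤ r}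

noncomputable def wSmall (K : Type) [Field K] (k r m : ℕ) : ℕ :=
  Nat.card {A : Matrix (Fin m) (Fin m) K //
    IsSkewSym A ∧ A.rank = 2*r ∧ Matrix.trace (Estd K k m * A) ≠ 0}

noncomputable def Wcap (K : Type) [Field K] (k t m : ℕ) : ℕ :=
  Nat.card {A : Matrix (Fin m) (Fin m) K //
    IsSkewSym A ∧ A.rank ≤ 2*t ∧ Matrix.trace (Estd K k m * A) ≠ 0}

noncomputable def projWt (K : Type) [Field K] (m t : ℕ)
    (φ : Matrix (Fin m) (Fin m) K →ₗ[K] K) : ℕ :=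
  Nat.card {x : Projectivization K (Matrix (Fin m) (Fin m) K) //
    ∃ (A : Matrix (Fin m) (Fin m) K) (h : A ≠ 0),
      x = Projectivization.mk K A h ∧ IsSkewSym A ∧ A.rank ≤ 2*t ∧ φ A ≠ 0}

noncomputable def affWt (K : Type) [Field K] (m t : ℕ)
    (F : Matrix (Fin m) (Fin m) K) : ℕ :=
  Nat.card {A : Matrix (Fin m) (Fin m) K //
    IsSkewSym A ∧ A.rank ≤ 2*t ∧ Matrix.trace (F * A) ≠ 0}

/-!
A skew-symmetric matrix of rank two is a bivector `u ∧ v`; all nonzero bivectors are congruent, so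
they define codewords of the same weight. If `F` has rank greater than two, congruence makes its
row `a` equal to `e_b`. Adding to `A` a bivector `e_a ∧ u`, where `u` depends only on `A` with row
and column `a` erased, turns the condition `tr ((e_a ∧ e_b) A) ≠ 0` into `tr (F A) ≠ 0`. The vector
`u` can be chosen so that the rank does not grow: either by a congruence that adds a combination
of the other rows to row `a`, or because column `b` of the erased matrix vanishes, and then
`A a b ≠ 0` leaves room for two more dimensions. The resulting injection of supports misses a
matrix of rank `2t` whose rows and columns `a`, `b` vanish, so the inequality of weights is strict.
The matrices of rank two are counted through the pairs of such a matrix and a nonzero vector `u` in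
its column space: for fixed `u` they are the nonzero bivectors `u ∧ v`.
-/

section Wedge

variable {n R : Type*} [CommRing R]

/-- The bivector `u ∧ v` as the skew-symmetric matrix `u vᵀ - v uᵀ`, bundled as a bilinear map. -/
def wedge : (n → R) →ₗ[R] (n → R) →ₗ[R] Matrix n n R :=
  vecMulVecBilin R R - (vecMulVecBilin R R).flip

theorem wedge_eq_sub (u v : n → R) : wedge u v = vecMulVec u v - vecMulVec v u := rfl

theorem wedge_apply (u v : n → R) (i j : n) : wedge u v i j = u i * v j - v i * u j := rfl

theorem wedge_self (u : n → R) : wedge u u = 0 := sub_self _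

theorem wedge_swap (u v : n → R) : wedge u v = -wedge v u := (neg_sub _ _).symm

theorem transpose_wedge (u v : n → R) : (wedge u v)ᵀ = -wedge u v := by
  simp only [wedge_eq_sub, transpose_sub, transpose_vecMulVec, neg_sub]

theorem wedge_single_row_eq_zero [DecidableEq n] {p i j : n} (hpi : p ≠ i) (hpj : p ≠ j) (x y : R) :
    wedge (Pi.single i x) (Pi.single j y) p = 0 := by
  ext l
  simp [wedge_apply, hpi, hpj]

theorem wedge_single_ne_zero [Nontrivial R] [DecidableEq n] {i j : n} (hij : i ≠ j) :
    wedge (Pi.single i (1 : R)) (Pi.single j 1) ≠ 0 := fun h ↦ by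
  simpa [wedge_apply, hij] using congr_fun₂ h i j

theorem transpose_add_wedge {A : Matrix n n R} (hA : Aᵀ = -A) (u v : n → R) :
    (A + wedge u v)ᵀ = -(A + wedge u v) := by
  rw [transpose_add, hA, transpose_wedge, neg_add]

theorem apply_swap_of_skew {A : Matrix n n R} (hA : Aᵀ = -A) (i j : n) : A j i = -A i j :=
  congr_fun₂ hA i j

variable [Fintype n]

theorem wedge_mulVec (u v x : n → R) : wedge u v *ᵥ x = (v ⬝ᵥ x) • u - (u ⬝ᵥ x) • v := by
  simp only [wedge_eq_sub, sub_mulVec, vecMulVec_mulVec, op_smul_eq_smul]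

theorem mul_wedge_mul_transpose (P : Matrix n n R) (u v : n → R) :
    P * wedge u v * Pᵀ = wedge (P *ᵥ u) (P *ᵥ v) := by
  simp only [wedge_eq_sub, mul_sub, sub_mul, mul_vecMulVec, vecMulVec_mul, vecMul_transpose]

theorem transpose_congr_of_skew {A : Matrix n n R} (hA : Aᵀ = -A) (P : Matrix n n R) :
    (P * A * Pᵀ)ᵀ = -(P * A * Pᵀ) := by
  simp only [transpose_mul, transpose_transpose, hA, Matrix.mul_assoc, neg_mul, mul_neg]

theorem dotProduct_mulVec_comm_of_skew {A : Matrix n n R} (hA : Aᵀ = -A) (x y : n → R) :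
    x ⬝ᵥ A *ᵥ y = -(y ⬝ᵥ A *ᵥ x) := by
  rw [dotProduct_mulVec, ← mulVec_transpose, hA, neg_mulVec, neg_dotProduct, dotProduct_comm]

theorem mulVec_single_one_of_skew [DecidableEq n] {A : Matrix n n R} (hA : Aᵀ = -A) (a : n) :
    A *ᵥ Pi.single a 1 = -A a := by
  ext i
  rw [mulVec_single_one, col_apply, apply_swap_of_skew hA a i, Pi.neg_apply]

theorem trace_mul_wedge {A : Matrix n n R} (hA : Aᵀ = -A) (u v : n → R) :
    trace (A * wedge u v) = 2 * (v ⬝ᵥ A *ᵥ u) := by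
  rw [wedge_eq_sub, mul_sub, mul_vecMulVec, mul_vecMulVec, trace_sub, trace_vecMulVec,
    trace_vecMulVec, dotProduct_comm, dotProduct_comm _ u, dotProduct_mulVec_comm_of_skew hA u]
  ring

end Wedge

section Rank

variable {n K : Type*} [Field K]

theorem diag_eq_zero_of_skew (hchar : ringChar K ≠ 2) {A : Matrix n n K} (hA : Aᵀ = -A) (i : n) :
    A i i = 0 :=
  (Ring.eq_self_iff_eq_zero_of_char_ne_two hchar).mp (apply_swap_of_skew hA i i).symm

theorem wedge_eq_zero_iff_mem_span {u : n → K} (hu : u ≠ 0) (v : n → K) :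
    wedge u v = 0 ↔ v ∈ K ∙ u := by
  rw [Submodule.mem_span_singleton]
  refine ⟨fun h ↦ ?_, ?_⟩
  · obtain ⟨i, hi⟩ := Function.ne_iff.mp hu
    refine ⟨v i / u i, funext fun j ↦ ?_⟩
    have hij := congr_fun₂ h i j
    rw [wedge_apply, Matrix.zero_apply, sub_eq_zero] at hij
    rw [Pi.smul_apply, smul_eq_mul, div_mul_eq_mul_div, ← hij, mul_div_cancel_left₀ _ hi]
  · rintro ⟨c, rfl⟩
    rw [map_smul, wedge_self, smul_zero]

theorem linearIndependent_pair_iff_wedge_ne_zero (u v : n → K) :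
    LinearIndependent K ![u, v] ↔ wedge u v ≠ 0 := by
  rcases eq_or_ne u 0 with rfl | hu
  · simp only [map_zero, LinearMap.zero_apply, ne_eq, not_true_eq_false, iff_false]
    exact fun h ↦ h.ne_zero 0 rfl
  · rw [LinearIndependent.pair_iff' hu, ne_eq, wedge_eq_zero_iff_mem_span hu,
      Submodule.mem_span_singleton, not_exists]

variable [Fintype n]

theorem rank_wedge_le_two (u v : n → K) : (wedge u v).rank ≤ 2 := by
  have hrange : LinearMap.range (wedge u v).mulVecLin ≤ Submodule.span K (Set.range ![u, v]) := by
    rintro _ ⟨x, rfl⟩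
    rw [mulVecLin_apply, wedge_mulVec]
    exact sub_mem (Submodule.smul_mem _ _ (Submodule.subset_span ⟨0, rfl⟩))
      (Submodule.smul_mem _ _ (Submodule.subset_span ⟨1, rfl⟩))
  exact (Submodule.finrank_mono hrange).trans (finrank_range_le_card _)

theorem mem_range_add_wedge {A : Matrix n n K} {u v p r : n → K} (hp : A *ᵥ p = 0)
    (hr : A *ᵥ r = 0) (hpr : p ⬝ᵥ wedge u v *ᵥ r ≠ 0) :
    u ∈ LinearMap.range (A + wedge u v).mulVecLin := by
  set d := p ⬝ᵥ wedge u v *ᵥ r with hd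
  refine ⟨d⁻¹ • ((u ⬝ᵥ p) • r - (u ⬝ᵥ r) • p), ?_⟩
  have hd' : d = (u ⬝ᵥ p) * (v ⬝ᵥ r) - (u ⬝ᵥ r) * (v ⬝ᵥ p) := by
    rw [hd, wedge_mulVec, dotProduct_sub, dotProduct_smul, dotProduct_smul, dotProduct_comm p,
      dotProduct_comm p, smul_eq_mul, smul_eq_mul]
    ring
  rw [mulVecLin_apply, mulVec_smul, inv_smul_eq_iff₀ hpr, hd', add_mulVec, mulVec_sub, mulVec_smul,
    mulVec_smul, hp, hr, wedge_mulVec]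
  simp only [dotProduct_sub, dotProduct_smul]
  module

theorem range_disjoint_span_pair {A : Matrix n n K} (hA : Aᵀ = -A) {u v p r : n → K}
    (hp : A *ᵥ p = 0) (hr : A *ᵥ r = 0) (hpr : p ⬝ᵥ wedge u v *ᵥ r ≠ 0) :
    Disjoint (LinearMap.range A.mulVecLin) (Submodule.span K (Set.range ![u, v])) := by
  have orthogonal : ∀ q : n → K, A *ᵥ q = 0 → ∀ x, A *ᵥ x ⬝ᵥ q = 0 := fun q hq x ↦ by
    rw [dotProduct_comm, dotProduct_mulVec, ← mulVec_transpose, hA, neg_mulVec, hq, neg_zero,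
      zero_dotProduct]
  rw [Submodule.disjoint_def]
  rintro _ ⟨x, rfl⟩ hx
  rw [mulVecLin_apply, range_cons_cons_empty, Submodule.mem_span_pair] at *
  obtain ⟨s, t, hst⟩ := hx
  have hsp := orthogonal p hp x
  have hsr := orthogonal r hr x
  rw [wedge_mulVec, dotProduct_sub, dotProduct_smul, dotProduct_smul, dotProduct_comm p,
    dotProduct_comm p, smul_eq_mul, smul_eq_mul] at hpr
  simp only [← hst, add_dotProduct, smul_dotProduct, smul_eq_mul] at hsp hsr
  have hs : s = 0 := by
    refine (mul_eq_zero.mp ?_).resolve_right hpr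
    linear_combination (v ⬝ᵥ r) * hsp - (v ⬝ᵥ p) * hsr
  have ht : t = 0 := by
    refine (mul_eq_zero.mp ?_).resolve_right hpr
    linear_combination (u ⬝ᵥ p) * hsr - (u ⬝ᵥ r) * hsp
  rw [← hst, hs, ht, zero_smul, zero_smul, add_zero]

theorem rank_add_two_le_rank_add_wedge {A : Matrix n n K} (hA : Aᵀ = -A) {u v p r : n → K}
    (hp : A *ᵥ p = 0) (hr : A *ᵥ r = 0) (hpr : p ⬝ᵥ wedge u v *ᵥ r ≠ 0) :
    A.rank + 2 ≤ (A + wedge u v).rank := by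
  set B := A + wedge u v with hB
  have hu : u ∈ LinearMap.range B.mulVecLin := mem_range_add_wedge hp hr hpr
  have hv : v ∈ LinearMap.range B.mulVecLin := by
    have h := mem_range_add_wedge (u := v) (v := -u) hp hr
      (by rwa [map_neg, ← wedge_swap])
    rwa [map_neg, ← wedge_swap] at h
  have hspan : Submodule.span K (Set.range ![u, v]) ≤ LinearMap.range B.mulVecLin := by
    rw [Submodule.span_le, range_cons_cons_empty]
    exact Set.pair_subset hu hv
  have hrange : LinearMap.range A.mulVecLin ≤ LinearMap.range B.mulVecLin := by
    rintro _ ⟨x, rfl⟩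
    have hx : A *ᵥ x = B *ᵥ x - ((v ⬝ᵥ x) • u - (u ⬝ᵥ x) • v) := by
      rw [← wedge_mulVec, hB, add_mulVec, add_sub_cancel_right]
    rw [mulVecLin_apply, hx]
    exact sub_mem ⟨x, rfl⟩ (sub_mem (Submodule.smul_mem _ _ hu) (Submodule.smul_mem _ _ hv))
  have hli : LinearIndependent K ![u, v] := by
    refine (linearIndependent_pair_iff_wedge_ne_zero u v).mpr fun h ↦ hpr ?_
    rw [h, zero_mulVec, dotProduct_zero]
  have hsum := Submodule.finrank_sup_add_finrank_inf_eq (LinearMap.range A.mulVecLin)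
    (Submodule.span K (Set.range ![u, v]))
  rw [(range_disjoint_span_pair hA hp hr hpr).eq_bot, finrank_bot, add_zero,
    finrank_span_eq_card hli, Fintype.card_fin] at hsum
  exact hsum.symm.trans_le (Submodule.finrank_mono (sup_le hrange hspan))

theorem eq_zero_of_rank_eq_zero {m : Type*} {A : Matrix m n K} (hA : A.rank = 0) : A = 0 := by
  classical
  have hlin : A.mulVecLin = 0 := LinearMap.range_eq_bot.mp (Submodule.finrank_eq_zero.mp hA)
  exact ext_of_mulVec_single fun j ↦ by
    rw [← mulVecLin_apply, hlin, LinearMap.zero_apply, zero_mulVec]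

theorem exists_dotProduct_mulVec_ne_zero {m : Type*} [Fintype m] {A : Matrix m n K} (hA : A ≠ 0) :
    ∃ p r, p ⬝ᵥ A *ᵥ r ≠ 0 := by
  classical
  obtain ⟨i, hi⟩ := Function.ne_iff.mp hA
  obtain ⟨j, hj⟩ := Function.ne_iff.mp hi
  refine ⟨Pi.single i 1, Pi.single j 1, ?_⟩
  rwa [single_one_dotProduct, mulVec_single_one]

theorem rank_wedge {u v : n → K} (h : wedge u v ≠ 0) : (wedge u v).rank = 2 := by
  obtain ⟨p, r, hpr⟩ := exists_dotProduct_mulVec_ne_zero h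
  refine (rank_wedge_le_two u v).antisymm ?_
  simpa only [rank_zero, zero_add] using rank_add_two_le_rank_add_wedge (A := 0)
    (transpose_zero.trans neg_zero.symm) (zero_mulVec p) (zero_mulVec r) hpr

theorem mem_range_wedge {u v : n → K} (h : wedge u v ≠ 0) :
    u ∈ LinearMap.range (wedge u v).mulVecLin := by
  obtain ⟨p, r, hpr⟩ := exists_dotProduct_mulVec_ne_zero h
  simpa only [zero_add] using mem_range_add_wedge (A := 0) (zero_mulVec p) (zero_mulVec r) hpr

theorem dotProduct_mulVec_self_of_skew (hchar : ringChar K ≠ 2) {A : Matrix n n K} (hA : Aᵀ = -A)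
    (x : n → K) : x ⬝ᵥ A *ᵥ x = 0 :=
  (Ring.eq_self_iff_eq_zero_of_char_ne_two hchar).mp (dotProduct_mulVec_comm_of_skew hA x x).symm

theorem exists_rank_add_wedge_add_two_le (hchar : ringChar K ≠ 2) {A : Matrix n n K}
    (hA : Aᵀ = -A) {u : n → K} (hu : u ≠ 0) (hmem : u ∈ LinearMap.range A.mulVecLin) :
    ∃ z, (A + wedge u z).rank + 2 ≤ A.rank := by
  obtain ⟨x, rfl⟩ := hmem
  rw [mulVecLin_apply] at hu
  obtain ⟨y, hy⟩ : ∃ y : n → K, y ⬝ᵥ A *ᵥ x = 1 := by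
    classical
    obtain ⟨i, hi⟩ := Function.ne_iff.mp hu
    refine ⟨Pi.single i ((A *ᵥ x) i)⁻¹, ?_⟩
    rw [single_dotProduct, inv_mul_cancel₀ hi]
  have hyx : x ⬝ᵥ A *ᵥ y = -1 := by rw [dotProduct_mulVec_comm_of_skew hA, hy]
  have hxx := dotProduct_mulVec_self_of_skew hchar hA x
  have hyy := dotProduct_mulVec_self_of_skew hchar hA y
  set B := A + wedge (A *ᵥ x) (A *ᵥ y) with hB
  refine ⟨A *ᵥ y, ?_⟩
  rw [mulVecLin_apply, ← hB]
  have hBx : B *ᵥ x = 0 := by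
    rw [hB, add_mulVec, wedge_mulVec, dotProduct_comm, hyx, dotProduct_comm, hxx]
    module
  have hBy : B *ᵥ y = 0 := by
    rw [hB, add_mulVec, wedge_mulVec, dotProduct_comm, hyy, dotProduct_comm, hy]
    module
  have hA' : A = B + wedge (A *ᵥ y) (A *ᵥ x) := by
    rw [hB, wedge_swap (A *ᵥ y), add_neg_cancel_right]
  conv_rhs => rw [hA']
  refine rank_add_two_le_rank_add_wedge (transpose_add_wedge hA _ _) hBx hBy ?_
  rw [wedge_mulVec, dotProduct_comm _ y, hy, dotProduct_comm _ y, hyy, one_smul, zero_smul,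
    sub_zero, hyx]
  exact neg_ne_zero.mpr one_ne_zero

theorem skew_rank_two_iff_mem_range_wedge (hchar : ringChar K ≠ 2) {A : Matrix n n K} {u : n → K}
    (hu : u ≠ 0) :
    (Aᵀ = -A ∧ A.rank = 2) ∧ u ∈ LinearMap.range A.mulVecLin ↔
      A ∈ LinearMap.range (wedge u) ∧ A ≠ 0 := by
  constructor
  · rintro ⟨⟨hA, hrank⟩, hmem⟩
    obtain ⟨z, hz⟩ := exists_rank_add_wedge_add_two_le hchar hA hu hmem
    have hzero : A + wedge u z = 0 := eq_zero_of_rank_eq_zero (by lia)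
    refine ⟨⟨-z, ?_⟩, fun h ↦ ?_⟩
    · rw [map_neg, neg_eq_of_add_eq_zero_left hzero]
    · rw [h, rank_zero] at hrank
      exact two_ne_zero hrank.symm
  · rintro ⟨⟨v, rfl⟩, hne⟩
    exact ⟨⟨transpose_wedge u v, rank_wedge hne⟩, mem_range_wedge hne⟩

end Rank

section Count

variable {n K : Type*} [Fintype n] [Field K]

theorem finrank_range_wedge_add_one {u : n → K} (hu : u ≠ 0) :
    Module.finrank K (LinearMap.range (wedge u)) + 1 = Fintype.card n := by
  have hker : LinearMap.ker (wedge u) = K ∙ u :=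
    Submodule.ext fun v ↦ wedge_eq_zero_iff_mem_span hu v
  rw [← finrank_span_singleton (K := K) hu, ← hker, LinearMap.finrank_range_add_finrank_ker,
    Module.finrank_fintype_fun_eq_card]

theorem ncard_submodule_diff_zero [Fintype K] {V : Type*} [AddCommGroup V] [Module K V]
    [FiniteDimensional K V] (W : Submodule K V) :
    {x | x ∈ W ∧ x ≠ 0}.ncard = Fintype.card K ^ Module.finrank K W - 1 := by
  rw [← Nat.card_eq_fintype_card, ← Module.natCard_eq_pow_finrank]
  exact Set.ncard_sdiff_singleton_of_mem W.zero_mem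

theorem ncard_skew_rank_two_mul [Fintype K] (hchar : ringChar K ≠ 2) :
    {A : Matrix n n K | Aᵀ = -A ∧ A.rank = 2}.ncard * (Fintype.card K ^ 2 - 1) =
      (Fintype.card K ^ Fintype.card n - 1) * (Fintype.card K ^ (Fintype.card n - 1) - 1) := by
  classical
  have hvec : {u : n → K | u ≠ 0}.ncard = Fintype.card K ^ Fintype.card n - 1 := by
    simpa using ncard_submodule_diff_zero (⊤ : Submodule K (n → K))
  rw [← hvec, Set.ncard_eq_toFinset_card', Set.ncard_eq_toFinset_card']
  refine Finset.card_mul_eq_card_mul (fun A u ↦ u ∈ LinearMap.range A.mulVecLin) ?_ ?_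
  · intro A hA
    rw [Set.mem_toFinset] at hA
    rw [← hA.2, rank, ← ncard_submodule_diff_zero, ← Set.ncard_coe_finset]
    congr 1
    ext u
    simp [Finset.bipartiteAbove, and_comm]
  · intro u hu
    rw [Set.mem_toFinset] at hu
    rw [← finrank_range_wedge_add_one hu, Nat.add_sub_cancel, ← ncard_submodule_diff_zero,
      ← Set.ncard_coe_finset]
    congr 1
    ext A
    simpa [Finset.bipartiteBelow] using skew_rank_two_iff_mem_range_wedge hchar hu

end Count

section Congruence

theorem exists_linearEquiv_apply_eq {ι K V : Type*} [Finite ι] [Field K] [AddCommGroup V]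
    [Module K V] {v w : ι → V} (hv : LinearIndependent K v) (hw : LinearIndependent K w) :
    ∃ g : V ≃ₗ[K] V, ∀ i, g (v i) = w i := by
  have : FiniteDimensional K (Submodule.span K (Set.range v)) :=
    FiniteDimensional.span_of_finite K (Set.finite_range v)
  let f := hv.linearCombinationEquiv.symm ≪≫ₗ hw.linearCombinationEquiv
  obtain ⟨g, hg⟩ := Submodule.exists_linearEquiv_restrict_eq f
  have hsingle (i : ι) : (hv.linearCombinationEquiv (Finsupp.single i 1) : V) = v i := by simp
  refine ⟨g, fun i ↦ ?_⟩
  rw [← hsingle, ← hg]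
  simp [f]

variable {n K : Type*} [Fintype n] [DecidableEq n] [Field K]

theorem exists_isUnit_det_congr_wedge_eq {u v u' v' : n → K} (h : wedge u v ≠ 0)
    (h' : wedge u' v' ≠ 0) :
    ∃ P : Matrix n n K, IsUnit P.det ∧ P * wedge u v * Pᵀ = wedge u' v' := by
  obtain ⟨g, hg⟩ := exists_linearEquiv_apply_eq
    ((linearIndependent_pair_iff_wedge_ne_zero u v).mpr h)
    ((linearIndependent_pair_iff_wedge_ne_zero u' v').mpr h')
  refine ⟨LinearMap.toMatrix' g.toLinearMap, ?_, ?_⟩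
  · rw [LinearMap.det_toMatrix']
    exact g.isUnit_det'
  have hu : g u = u' := hg 0
  have hv : g v = v' := hg 1
  rw [mul_wedge_mul_transpose, LinearMap.toMatrix'_mulVec, LinearMap.toMatrix'_mulVec,
    LinearEquiv.coe_coe, hu, hv]

theorem exists_isUnit_det_congr_row_eq_single {A : Matrix n n K} {a b : n} (haa : A a a = 0)
    (hab : A a b ≠ 0) :
    ∃ P : Matrix n n K, IsUnit P.det ∧ (P * A * Pᵀ) a = Pi.single b 1 := by
  have hne : a ≠ b := fun h ↦ hab (h ▸ haa)
  let w : n → K := (A a b)⁻¹ • (Pi.single b 1 - A a)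
  have hw : A a b • w = Pi.single b 1 - A a := smul_inv_smul₀ hab _
  have hwa : w a = 0 := by simp [w, haa, hne]
  let P : Matrix n n K := 1 + vecMulVec w (Pi.single b 1)
  have hPa : P a = Pi.single a 1 := by
    ext j
    simp [P, vecMulVec_apply, hwa, one_apply, Pi.single_apply, eq_comm]
  refine ⟨P, ?_, ?_⟩
  · have hdet : P.det = (A a b)⁻¹ := by
      simp only [P]
      rw [vecMulVec_eq Unit, det_one_add_replicateCol_mul_replicateRow, single_one_dotProduct]
      simp [w, mul_sub, hab]
    exact hdet ▸ (inv_ne_zero hab).isUnit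
  · calc (P * A * Pᵀ) a = P *ᵥ (P a ᵥ* A) := by
          rw [mul_apply_eq_vecMul, mul_apply_eq_vecMul, vecMul_transpose]
      _ = A a + A a b • w := by
          rw [hPa, single_one_vecMul, add_mulVec, one_mulVec, vecMulVec_mulVec, op_smul_eq_smul,
            single_one_dotProduct, row]
      _ = Pi.single b 1 := by rw [hw, add_sub_cancel]

end Congruence

section Shear

variable {n K : Type*} [Fintype n] [Field K]

theorem rank_add_le {m : Type*} (A B : Matrix m n K) :
    (A + B).rank ≤ A.rank + B.rank := by
  have hle : LinearMap.range (A + B).mulVecLin ≤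
      LinearMap.range A.mulVecLin ⊔ LinearMap.range B.mulVecLin := by
    rw [mulVecLin_add]
    exact LinearMap.range_add_le _ _
  exact (Submodule.finrank_mono hle).trans (Submodule.finrank_add_le_finrank_add_finrank _ _)

theorem congr_add_wedge_eq [DecidableEq n] (hchar : ringChar K ≠ 2) {A : Matrix n n K}
    (hA : Aᵀ = -A) {e x : n → K} (hx : x ⬝ᵥ e = 0) (v : n → K) :
    (1 - vecMulVec e x) * (A + wedge e v) * (1 - vecMulVec e x)ᵀ = A + wedge e (v + A *ᵥ x) := by
  have hxA : x ᵥ* A = -(A *ᵥ x) := by rw [← mulVec_transpose, hA, neg_mulVec]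
  have hPA : (1 - vecMulVec e x) * A * (1 - vecMulVec e x)ᵀ = A + wedge e (A *ᵥ x) := by
    rw [transpose_sub, transpose_one, transpose_vecMulVec, sub_mul, one_mul, vecMulVec_mul, hxA,
      vecMulVec_neg, sub_neg_eq_add, mul_sub, mul_one, mul_vecMulVec, add_mulVec,
      vecMulVec_mulVec, dotProduct_comm, dotProduct_mulVec_self_of_skew hchar hA, wedge_eq_sub]
    simp only [MulOpposite.op_zero, zero_smul, add_zero, add_sub_assoc]
  have hPe : (1 - vecMulVec e x) *ᵥ e = e := by
    simp [sub_mulVec, vecMulVec_mulVec, hx]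
  have hPv : (1 - vecMulVec e x) *ᵥ v = v - (x ⬝ᵥ v) • e := by
    simp [sub_mulVec, vecMulVec_mulVec]
  rw [mul_add, add_mul, hPA, mul_wedge_mul_transpose, hPe, hPv, map_sub, map_smul, wedge_self,
    smul_zero, sub_zero, map_add]
  abel

theorem rank_add_wedge_add_mulVec_le (hchar : ringChar K ≠ 2) {A : Matrix n n K}
    (hA : Aᵀ = -A) {e x : n → K} (hx : x ⬝ᵥ e = 0) (v : n → K) :
    (A + wedge e (v + A *ᵥ x)).rank ≤ (A + wedge e v).rank := by
  classical
  rw [← congr_add_wedge_eq hchar hA hx v]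
  exact (rank_mul_le_left _ _).trans (rank_mul_le_right _ _)

variable [DecidableEq n]

theorem rank_add_two_le_rank_add_wedge_single {A : Matrix n n K} (hA : Aᵀ = -A) {a b : n}
    (hab : a ≠ b) (ha : A *ᵥ Pi.single a 1 = 0) (hb : A *ᵥ Pi.single b 1 = 0) {v : n → K}
    (hv : v b ≠ 0) : A.rank + 2 ≤ (A + wedge (Pi.single a 1) v).rank := by
  refine rank_add_two_le_rank_add_wedge hA ha hb ?_
  rw [mulVec_single_one, single_one_dotProduct, col_apply, wedge_apply]
  simpa [hab.symm]

theorem exists_apply_eq_rank_add_wedge_le (hchar : ringChar K ≠ 2) {A : Matrix n n K}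
    (hA : Aᵀ = -A) {a b : n} (hab : a ≠ b) (ha : A *ᵥ Pi.single a 1 = 0) (c : K) :
    ∃ u : n → K, u b = c ∧ ∀ v, v b ≠ 0 →
      (A + wedge (Pi.single a 1) (v + u)).rank ≤ (A + wedge (Pi.single a 1) v).rank := by
  by_cases hb : A *ᵥ Pi.single b 1 = 0
  · refine ⟨Pi.single b c, Pi.single_eq_same _ _, fun v hv ↦ ?_⟩
    exact ((rank_add_le _ _).trans (Nat.add_le_add_left (rank_wedge_le_two _ _) _)).trans
      (rank_add_two_le_rank_add_wedge_single hA hab ha hb hv)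
  · obtain ⟨l, hl⟩ := Function.ne_iff.mp hb
    rw [mulVec_single_one, col_apply, Pi.zero_apply] at hl
    have hbl : A b l ≠ 0 := by
      rwa [apply_swap_of_skew hA l b, neg_ne_zero]
    have hal : a ≠ l := by
      rintro rfl
      exact hbl (by simpa only [mulVec_single_one, col_apply, Pi.zero_apply] using congr_fun ha b)
    refine ⟨A *ᵥ Pi.single l (c / A b l), ?_, fun v _ ↦ ?_⟩
    · rw [mulVec_single, Pi.smul_apply, col_apply, op_smul_eq_smul, smul_eq_mul,
        div_mul_cancel₀ c hbl]
    · exact rank_add_wedge_add_mulVec_le hchar hA (by simp [hal]) v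

end Shear

section Erase

variable {n R K : Type*} [DecidableEq n] [CommRing R] [Field K]

/-- The matrix `A` with its row and its column of index `a` replaced by zero. -/
def eraseRowCol {n R : Type*} [DecidableEq n] [Zero R] (a : n) (A : Matrix n n R) :
    Matrix n n R :=
  of fun i j ↦ if i = a ∨ j = a then 0 else A i j

theorem eraseRowCol_apply (a : n) (A : Matrix n n R) (i j : n) :
    eraseRowCol a A i j = if i = a ∨ j = a then 0 else A i j := rfl

theorem transpose_eraseRowCol {A : Matrix n n R} (hA : Aᵀ = -A) (a : n) :
    (eraseRowCol a A)ᵀ = -eraseRowCol a A := by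
  ext i j
  simp only [transpose_apply, Matrix.neg_apply, eraseRowCol_apply, or_comm (a := j = a),
    apply_swap_of_skew hA i j]
  split_ifs
  exacts [neg_zero.symm, rfl]

theorem eraseRowCol_mulVec_single [Fintype n] (a : n) (A : Matrix n n R) :
    eraseRowCol a A *ᵥ Pi.single a 1 = 0 := by
  ext i
  simp [eraseRowCol_apply]

theorem eraseRowCol_add_wedge (a : n) (A : Matrix n n R) (v : n → R) :
    eraseRowCol a (A + wedge (Pi.single a 1) v) = eraseRowCol a A := by
  ext i j
  by_cases hi : i = a
  · simp [eraseRowCol_apply, hi]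
  · by_cases hj : j = a <;> simp [eraseRowCol_apply, wedge_apply, hi, hj]

theorem eraseRowCol_add_wedge_row (hchar : ringChar K ≠ 2) {A : Matrix n n K} (hA : Aᵀ = -A)
    (a : n) : eraseRowCol a A + wedge (Pi.single a 1) (A a) = A := by
  ext i j
  have haa := diag_eq_zero_of_skew hchar hA a
  have hia := apply_swap_of_skew hA a i
  by_cases hi : i = a
  · subst hi
    by_cases hj : j = i <;> simp [eraseRowCol_apply, wedge_apply, hj, haa]
  · by_cases hj : j = a <;> simp [eraseRowCol_apply, wedge_apply, hi, hj, hia]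

theorem eraseRowCol_eq_self {A : Matrix n n R} (hA : Aᵀ = -A) {a : n} (ha : A a = 0) :
    eraseRowCol a A = A := by
  ext i j
  rw [eraseRowCol_apply]
  split_ifs with h
  · rcases h with rfl | rfl
    · rw [ha, Pi.zero_apply]
    · rw [apply_swap_of_skew hA j i, ha, Pi.zero_apply, neg_zero]
  · rfl

theorem rank_eraseRowCol_add_two_le [Fintype n] (hchar : ringChar K ≠ 2) {A : Matrix n n K}
    (hA : Aᵀ = -A) {a b : n} (hab : A a b ≠ 0) (hb : eraseRowCol a A b = 0) :
    (eraseRowCol a A).rank + 2 ≤ A.rank := by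
  have hR := transpose_eraseRowCol hA a
  have hne : a ≠ b := fun h ↦ hab (h ▸ diag_eq_zero_of_skew hchar hA a)
  conv_rhs => rw [← eraseRowCol_add_wedge_row hchar hA a]
  refine rank_add_two_le_rank_add_wedge_single hR hne (eraseRowCol_mulVec_single a A) ?_ hab
  rw [mulVec_single_one_of_skew hR, hb, neg_zero]

end Erase

section Trace

variable {n K : Type*} [Fintype n] [DecidableEq n] [Field K]

theorem trace_wedge_single_mul {A : Matrix n n K} (hA : Aᵀ = -A) (a b : n) :
    trace (wedge (Pi.single a 1) (Pi.single b 1) * A) = -(2 * A a b) := by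
  rw [trace_mul_comm, trace_mul_wedge hA, mulVec_single_one_of_skew hA, dotProduct_neg,
    single_one_dotProduct, mul_neg]

theorem trace_wedge_single_mul_ne_zero_iff (hchar : ringChar K ≠ 2) {A : Matrix n n K}
    (hA : Aᵀ = -A) {a b : n} :
    trace (wedge (Pi.single a 1) (Pi.single b 1) * A) ≠ 0 ↔ A a b ≠ 0 := by
  rw [trace_wedge_single_mul hA, neg_ne_zero, mul_ne_zero_iff,
    and_iff_right (Ring.two_ne_zero hchar)]

theorem trace_mul_wedge_single {G : Matrix n n K} (hG : Gᵀ = -G) {a b : n}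
    (hrow : G a = Pi.single b 1) (v : n → K) :
    trace (G * wedge (Pi.single a 1) v) = -(2 * v b) := by
  rw [trace_mul_wedge hG, mulVec_single_one_of_skew hG, hrow, dotProduct_neg,
    dotProduct_single_one, mul_neg]

theorem exists_injective_trace_eq (hchar : ringChar K ≠ 2) {G : Matrix n n K} (hG : Gᵀ = -G)
    {a b : n} (hab : a ≠ b) (hrow : G a = Pi.single b 1) :
    ∃ f : Matrix n n K → Matrix n n K, f.Injective ∧ ∀ A : Matrix n n K, Aᵀ = -A →
      (f A)ᵀ = -f A ∧ eraseRowCol a (f A) = eraseRowCol a A ∧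
      trace (G * f A) = trace (wedge (Pi.single a 1) (Pi.single b 1) * A) ∧
      (A a b ≠ 0 → (f A).rank ≤ A.rank) := by
  have htwo : (2 : K) ≠ 0 := Ring.two_ne_zero hchar
  have shift (R : Matrix n n K) (hR : Rᵀ = -R) (ha : R *ᵥ Pi.single a 1 = 0) :=
    exists_apply_eq_rank_add_wedge_le hchar hR hab ha (trace (G * R) / 2)
  choose! u hu_apply hu_rank using shift
  let f : Matrix n n K → Matrix n n K := fun A ↦
    A + wedge (Pi.single a 1) (u (eraseRowCol a A))
  have erase_f (A : Matrix n n K) : eraseRowCol a (f A) = eraseRowCol a A :=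
    eraseRowCol_add_wedge a A _
  refine ⟨f, fun A B hAB ↦ ?_, fun A hA ↦
    ⟨transpose_add_wedge hA _ _, erase_f A, ?_, fun hAab ↦ ?_⟩⟩
  · have herase : eraseRowCol a A = eraseRowCol a B := by rw [← erase_f, hAB, erase_f]
    simpa only [f, herase, add_left_inj] using hAB
  all_goals
    have hR := transpose_eraseRowCol hA a
    have ha := eraseRowCol_mulVec_single a A
    have hA_eq := eraseRowCol_add_wedge_row hchar hA a
  · calc trace (G * f A)
        = trace (G * A) - trace (G * eraseRowCol a A) := by
          rw [mul_add, trace_add, trace_mul_wedge_single hG hrow, hu_apply _ hR ha,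
            mul_div_cancel₀ _ htwo, sub_eq_add_neg]
      _ = trace (G * wedge (Pi.single a 1) (A a)) := by
          rw [sub_eq_iff_eq_add', ← trace_add, ← mul_add, hA_eq]
      _ = trace (wedge (Pi.single a 1) (Pi.single b 1) * A) := by
          rw [trace_mul_wedge_single hG hrow, trace_wedge_single_mul hA]
  · have hf : f A = eraseRowCol a A + wedge (Pi.single a 1) (A a + u (eraseRowCol a A)) := by
      rw [map_add, ← add_assoc, hA_eq]
    calc (f A).rank ≤ (eraseRowCol a A + wedge (Pi.single a 1) (A a)).rank :=
          hf ▸ hu_rank _ hR ha _ hAab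
      _ = A.rank := by rw [hA_eq]

theorem exists_apply_ne_zero_of_two_lt_rank (hchar : ringChar K ≠ 2) {G : Matrix n n K}
    (hG : Gᵀ = -G) {a b : n} (hrow : G a = Pi.single b 1) (hrank : 2 < G.rank) :
    ∃ i j, i ∉ ({a, b} : Finset n) ∧ j ∉ ({a, b} : Finset n) ∧ G i j ≠ 0 := by
  by_contra! hzero
  have herase : eraseRowCol b (eraseRowCol a G) = 0 := by
    ext i j
    simp only [eraseRowCol_apply, Matrix.zero_apply]
    grind
  have hG_eq : G = wedge (Pi.single b 1) (eraseRowCol a G b - Pi.single a 1) := by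
    conv_lhs => rw [← eraseRowCol_add_wedge_row hchar hG a,
      ← eraseRowCol_add_wedge_row hchar (transpose_eraseRowCol hG a) b, herase, zero_add, hrow]
    rw [map_sub, sub_eq_add_neg, ← wedge_swap]
  exact hrank.not_ge (hG_eq ▸ rank_wedge_le_two _ _)

end Trace

section Support

variable {n K : Type*} [Fintype n] [Field K]

theorem exists_add_wedge_trace_ne_zero (hchar : ringChar K ≠ 2) {H A : Matrix n n K}
    (hA : trace (H * A) ≠ 0) (u v : n → K) :
    ∃ x : K, x ≠ 0 ∧ trace (H * (A + wedge u (x • v))) ≠ 0 := by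
  by_cases h : trace (H * (A + wedge u v)) = 0
  · refine ⟨-1, neg_ne_zero.mpr one_ne_zero, fun h' ↦ hA ?_⟩
    rw [mul_add, trace_add] at h
    rw [neg_one_smul, map_neg, mul_add, trace_add, mul_neg, trace_neg] at h'
    refine (mul_eq_zero.mp ?_).resolve_left (Ring.two_ne_zero hchar)
    linear_combination h + h'
  · exact ⟨1, one_ne_zero, by rwa [one_smul]⟩

theorem exists_skew_supported_trace_ne_zero (hchar : ringChar K ≠ 2) {H : Matrix n n K}
    (hH : Hᵀ = -H) {i j : n} (hij : H i j ≠ 0) {s : ℕ} (hs : 1 ≤ s) (S : Finset n) (hi : i ∈ S)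
    (hj : j ∈ S) (hS : S.card = 2 * s) :
    ∃ A : Matrix n n K, Aᵀ = -A ∧ (∀ p ∉ S, A p = 0) ∧ 2 * s ≤ A.rank ∧ trace (H * A) ≠ 0 := by
  classical
  induction s, hs using Nat.le_induction generalizing S with
  | base =>
    let E : Matrix n n K := wedge (Pi.single i 1) (Pi.single j 1)
    have htrace : trace (H * E) ≠ 0 := by
      rwa [trace_mul_comm, trace_wedge_single_mul_ne_zero_iff hchar hH]
    have hE : E ≠ 0 := fun h ↦ htrace (by rw [h, mul_zero, trace_zero])
    refine ⟨E, transpose_wedge _ _, fun p hp ↦ ?_, (rank_wedge hE).ge, htrace⟩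
    exact wedge_single_row_eq_zero (ne_of_mem_of_not_mem hi hp).symm
      (ne_of_mem_of_not_mem hj hp).symm 1 1
  | succ s hs ih =>
    obtain ⟨p, hp, r, hr, hpr⟩ : ∃ p ∈ S \ {i, j}, ∃ r ∈ S \ {i, j}, p ≠ r := by
      rw [← Finset.one_lt_card]
      have := Finset.le_card_sdiff {i, j} S
      have := Finset.card_le_two (a := i) (b := j)
      lia
    obtain ⟨A, hA, hsupp, hrank, htrace⟩ := ih (S \ {p, r}) (by grind) (by grind) (by
      rw [Finset.card_sdiff_of_subset (by grind), Finset.card_pair hpr, hS]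
      lia)
    have hAp : A *ᵥ Pi.single p 1 = 0 := by
      rw [mulVec_single_one_of_skew hA, hsupp p (by simp), neg_zero]
    have hAr : A *ᵥ Pi.single r 1 = 0 := by
      rw [mulVec_single_one_of_skew hA, hsupp r (by simp), neg_zero]
    obtain ⟨x, hx, hxtrace⟩ :=
      exists_add_wedge_trace_ne_zero hchar htrace (Pi.single p 1) (Pi.single r 1)
    refine ⟨_, transpose_add_wedge hA _ _, fun l hl ↦ ?_, (Nat.add_le_add_right hrank 2).trans
      (rank_add_two_le_rank_add_wedge_single hA hpr hAp hAr (by simpa using hx)), hxtrace⟩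
    rw [← Pi.single_smul, smul_eq_mul, mul_one]
    calc A l + wedge (Pi.single p 1) (Pi.single r x) l = 0 + 0 :=
          congr_arg₂ _ (hsupp l (by grind)) (wedge_single_row_eq_zero (by grind) (by grind) 1 x)
      _ = 0 := add_zero 0

end Support

section Weight

variable {K : Type} [Field K] {m : ℕ}

theorem isSkewSym_iff (hchar : ringChar K ≠ 2) {A : Matrix (Fin m) (Fin m) K} :
    IsSkewSym A ↔ Aᵀ = -A :=
  and_iff_left_of_imp (diag_eq_zero_of_skew hchar)

theorem affWt_eq_ncard (hchar : ringChar K ≠ 2) (t : ℕ) (F : Matrix (Fin m) (Fin m) K) :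
    affWt K m t F =
      {A : Matrix (Fin m) (Fin m) K | Aᵀ = -A ∧ A.rank ≤ 2 * t ∧ trace (F * A) ≠ 0}.ncard := by
  simp only [affWt, isSkewSym_iff hchar]
  exact Nat.card_coe_set_eq _

variable [Finite K]

theorem affWt_congr_le (hchar : ringChar K ≠ 2) (t : ℕ)
    {P : Matrix (Fin m) (Fin m) K} (hP : IsUnit P.det) (F : Matrix (Fin m) (Fin m) K) :
    affWt K m t (P * F * Pᵀ) ≤ affWt K m t F := by
  have hPu : IsUnit P := (isUnit_iff_isUnit_det P).mpr hP
  have hPtu : IsUnit Pᵀ := (isUnit_transpose P).mpr hPu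
  rw [affWt_eq_ncard hchar, affWt_eq_ncard hchar]
  refine Set.ncard_le_ncard_of_injOn (fun A ↦ Pᵀ * A * P) ?_
    (hPu.mul_left_injective.comp hPtu.mul_right_injective).injOn
  rintro A ⟨hA, hrank, htrace⟩
  refine ⟨transpose_congr_of_skew hA Pᵀ,
    (rank_mul_le_left _ _).trans ((rank_mul_le_right _ _).trans hrank), ?_⟩
  rwa [← Matrix.mul_assoc, trace_mul_comm, ← Matrix.mul_assoc, ← Matrix.mul_assoc]

theorem affWt_wedge_eq (hchar : ringChar K ≠ 2) (t : ℕ) {u v u' v' : Fin m → K}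
    (h : wedge u v ≠ 0) (h' : wedge u' v' ≠ 0) :
    affWt K m t (wedge u v) = affWt K m t (wedge u' v') := by
  have le {u v u' v' : Fin m → K} (h : wedge u v ≠ 0) (h' : wedge u' v' ≠ 0) :
      affWt K m t (wedge u' v') ≤ affWt K m t (wedge u v) := by
    obtain ⟨P, hP, hcongr⟩ := exists_isUnit_det_congr_wedge_eq h h'
    exact hcongr ▸ affWt_congr_le hchar t hP _
  exact (le h' h).antisymm (le h h')

variable {t : ℕ}

theorem affWt_wedge_single_lt (hchar : ringChar K ≠ 2) (ht : 1 ≤ t) (htm : 2 * t ≤ m - 2)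
    {G : Matrix (Fin m) (Fin m) K} (hG : Gᵀ = -G) {a b : Fin m} (hab : a ≠ b)
    (hrow : G a = Pi.single b 1) (hrank : 2 < G.rank) :
    affWt K m t (wedge (Pi.single a 1) (Pi.single b 1)) < affWt K m t G := by
  obtain ⟨f, f_injective, hf⟩ := exists_injective_trace_eq hchar hG hab hrow
  obtain ⟨i, j, hi, hj, hij⟩ := exists_apply_ne_zero_of_two_lt_rank hchar hG hrow hrank
  obtain ⟨S, hijS, hSab, hS⟩ : ∃ S, {i, j} ⊆ S ∧ S ⊆ ({a, b} : Finset (Fin m))ᶜ ∧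
      S.card = 2 * t := by
    refine Finset.exists_subsuperset_card_eq ?_ (Finset.card_le_two.trans (by lia)) ?_
    · simp only [Finset.insert_subset_iff, Finset.singleton_subset_iff, Finset.mem_compl]
      exact ⟨hi, hj⟩
    · rwa [Finset.card_compl, Fintype.card_fin, Finset.card_pair hab]
  obtain ⟨B, hB, hBsupp, hBrank, hBtrace⟩ := exists_skew_supported_trace_ne_zero hchar hG hij ht S
    (hijS (by simp)) (hijS (by simp)) hS
  have hBa : B a = 0 := hBsupp a fun h ↦ by simpa using hSab h
  have hBb : B b = 0 := hBsupp b fun h ↦ by simpa using hSab h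
  rw [affWt_eq_ncard hchar, affWt_eq_ncard hchar, ← Set.ncard_image_of_injective _ f_injective]
  refine Set.ncard_lt_ncard ((Set.ssubset_iff_of_subset ?_).mpr ⟨B, ⟨hB, ?_, hBtrace⟩, ?_⟩)
  · rintro _ ⟨A, ⟨hA, hArank, hAtrace⟩, rfl⟩
    obtain ⟨hfA, -, hftrace, hfrank⟩ := hf A hA
    have hAab : A a b ≠ 0 := (trace_wedge_single_mul_ne_zero_iff hchar hA).mp hAtrace
    exact ⟨hfA, (hfrank hAab).trans hArank, by rwa [hftrace]⟩
  · rw [← hS]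
    exact rank_le_card_of_support_subset _ _ (Function.support_subset_iff'.mpr hBsupp)
  · rintro ⟨A, ⟨hA, hArank, hAtrace⟩, rfl⟩
    have herase : f A = eraseRowCol a A := by
      rw [← (hf A hA).2.1, eraseRowCol_eq_self hB hBa]
    rw [herase] at hBb hBrank
    have hAab : A a b ≠ 0 := (trace_wedge_single_mul_ne_zero_iff hchar hA).mp hAtrace
    have hle : (eraseRowCol a A).rank + 2 ≤ A.rank := rank_eraseRowCol_add_two_le hchar hA hAab hBb
    lia

theorem affWt_wedge_lt_of_two_lt_rank (hchar : ringChar K ≠ 2) (ht : 1 ≤ t)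
    (htm : 2 * t ≤ m - 2) {F : Matrix (Fin m) (Fin m) K} (hF : Fᵀ = -F) (hrank : 2 < F.rank)
    {u v : Fin m → K} (huv : wedge u v ≠ 0) : affWt K m t (wedge u v) < affWt K m t F := by
  obtain ⟨a, b, hab⟩ : ∃ a b, F a b ≠ 0 := by
    by_contra! hzero
    rw [show F = 0 from ext hzero, rank_zero] at hrank
    exact absurd hrank (by lia)
  have hne : a ≠ b := fun h ↦ hab (h ▸ diag_eq_zero_of_skew hchar hF a)
  obtain ⟨P, hP, hrow⟩ := exists_isUnit_det_congr_row_eq_single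
    (diag_eq_zero_of_skew hchar hF a) hab
  have hG : (P * F * Pᵀ)ᵀ = -(P * F * Pᵀ) := transpose_congr_of_skew hF P
  have hGrank : (P * F * Pᵀ).rank = F.rank := by
    rw [rank_mul_eq_left_of_isUnit_det _ _ (by rwa [det_transpose]),
      rank_mul_eq_right_of_isUnit_det _ _ hP]
  calc affWt K m t (wedge u v) = affWt K m t (wedge (Pi.single a 1) (Pi.single b 1)) :=
        affWt_wedge_eq hchar t huv (wedge_single_ne_zero hne)
    _ < affWt K m t (P * F * Pᵀ) :=
        affWt_wedge_single_lt hchar ht htm hG hne hrow (hrank.trans_eq hGrank.symm)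
    _ ≤ affWt K m t F := affWt_congr_le hchar t hP F

theorem affWt_eq_affWt_wedge_iff (hchar : ringChar K ≠ 2) (ht : 1 ≤ t) (htm : 2 * t ≤ m - 2)
    {F : Matrix (Fin m) (Fin m) K} (hF : Fᵀ = -F) (hne : F ≠ 0) {u v : Fin m → K}
    (huv : wedge u v ≠ 0) : affWt K m t F = affWt K m t (wedge u v) ↔ F.rank = 2 := by
  obtain ⟨x, hx⟩ : ∃ x, F *ᵥ x ≠ 0 := by
    obtain ⟨p, r, hpr⟩ := exists_dotProduct_mulVec_ne_zero hne
    exact ⟨r, fun h ↦ hpr (by rw [h, dotProduct_zero])⟩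
  constructor
  · intro heq
    obtain ⟨z, hz⟩ := exists_rank_add_wedge_add_two_le hchar hF hx ⟨x, rfl⟩
    have hle : F.rank ≤ 2 := not_lt.mp fun hlt ↦
      (affWt_wedge_lt_of_two_lt_rank hchar ht htm hF hlt huv).ne' heq
    lia
  · intro hrank
    obtain ⟨⟨z, hz : wedge (F *ᵥ x) z = F⟩, -⟩ :=
      (skew_rank_two_iff_mem_range_wedge hchar hx).mp ⟨⟨hF, hrank⟩, x, rfl⟩
    rw [← affWt_wedge_eq hchar t (hz.trans_ne hne) huv, hz]

theorem isSkewSym_and_affWt_eq_iff (hchar : ringChar K ≠ 2) (ht : 1 ≤ t) (htm : 2 * t ≤ m - 2)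
    {u v : Fin m → K} (huv : wedge u v ≠ 0) (F : Matrix (Fin m) (Fin m) K) :
    (IsSkewSym F ∧ F ≠ 0 ∧ affWt K m t F = affWt K m t (wedge u v)) ↔ Fᵀ = -F ∧ F.rank = 2 := by
  rw [isSkewSym_iff hchar]
  refine and_congr_right fun hF ↦ ⟨fun ⟨hne, heq⟩ ↦ ?_, fun hrank ↦ ?_⟩
  · exact (affWt_eq_affWt_wedge_iff hchar ht htm hF hne huv).mp heq
  · have hne : F ≠ 0 := by
      rintro rfl
      rw [rank_zero] at hrank
      exact two_ne_zero hrank.symm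
    exact ⟨hne, (affWt_eq_affWt_wedge_iff hchar ht htm hF hne huv).mpr hrank⟩

end Weight

section Standard

variable {K : Type} [Field K] {m : ℕ}

theorem Estd_zero : Estd K 0 m = 0 := by
  ext i j
  simp [Estd]

theorem Estd_succ {k : ℕ} (hk : 2 * k + 1 < m) :
    Estd K (k + 1) m = Estd K k m +
      wedge (Pi.single ⟨2 * k, by lia⟩ 1) (Pi.single ⟨2 * k + 1, hk⟩ 1) := by
  ext i j
  simp only [Estd, wedge_apply, of_apply, Matrix.add_apply, Pi.single_apply, Fin.ext_iff]
  split_ifs <;> first | lia | simp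

theorem Estd_one (hm : 1 < m) :
    Estd K 1 m = wedge (Pi.single ⟨0, by lia⟩ 1) (Pi.single ⟨1, hm⟩ 1) := by
  rw [Estd_succ (k := 0) hm, Estd_zero, zero_add]

theorem transpose_Estd (k : ℕ) : (Estd K k m)ᵀ = -Estd K k m := by
  ext i j
  simp only [Estd, transpose_apply, Matrix.neg_apply, of_apply]
  split_ifs <;> first | lia | simp

theorem Estd_mulVec_single {k : ℕ} {j : Fin m} (hj : 2 * k ≤ j) :
    Estd K k m *ᵥ Pi.single j 1 = 0 := by
  ext i
  rw [mulVec_single_one, col_apply, Estd, of_apply, if_neg (by lia), if_neg (by lia), Pi.zero_apply]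

theorem two_mul_le_rank_Estd {k : ℕ} (hk : 2 * k ≤ m) : 2 * k ≤ (Estd K k m).rank := by
  induction k with
  | zero => exact Nat.zero_le _
  | succ k ih =>
    rw [Estd_succ (by lia)]
    refine (Nat.add_le_add_right (ih (by lia)) 2).trans
      (rank_add_two_le_rank_add_wedge (transpose_Estd k)
        (Estd_mulVec_single (j := ⟨2 * k, by lia⟩) le_rfl)
        (Estd_mulVec_single (j := ⟨2 * k + 1, by lia⟩) (Nat.le_succ _)) ?_)
    rw [mulVec_single_one, single_one_dotProduct, col_apply, wedge_apply]
    simp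

end Standard

theorem stmt18_general (K : Type) [Field K] [Fintype K] (hchar : ringChar K ≠ 2)
    (m k t : ℕ) (hk : 2 ≤ k) (hkm : 2 * k ≤ m) (ht : 1 ≤ t) (htm : 2 * t ≤ m - 2) :
    Wcap K 1 t m < Wcap K k t m ∧
    Nat.card {F : Matrix (Fin m) (Fin m) K //
        IsSkewSym F ∧ F ≠ 0 ∧ affWt K m t F = Wcap K 1 t m} * (Fintype.card K ^ 2 - 1)
      = (Fintype.card K ^ m - 1) * (Fintype.card K ^ (m - 1) - 1) := by
  have hm : 1 < m := by lia
  let e₀ : Fin m → K := Pi.single ⟨0, by lia⟩ 1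
  let e₁ : Fin m → K := Pi.single ⟨1, hm⟩ 1
  have hwedge : wedge e₀ e₁ ≠ 0 := wedge_single_ne_zero (by simp)
  have hW : Wcap K 1 t m = affWt K m t (wedge e₀ e₁) := congr_arg (affWt K m t) (Estd_one hm)
  have hrank : 2 < (Estd K k m).rank := by
    have := two_mul_le_rank_Estd (K := K) hkm
    lia
  refine ⟨hW ▸ affWt_wedge_lt_of_two_lt_rank hchar ht htm (transpose_Estd k) hrank hwedge, ?_⟩
  have hcount := ncard_skew_rank_two_mul (n := Fin m) hchar
  rw [Fintype.card_fin] at hcount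
  simp only [hW, isSkewSym_and_affWt_eq_iff hchar ht htm hwedge]
  exact hcount

theorem stmt18 (K : Type) [Field K] [Fintype K] (hchar : ringChar K ≠ 2)
    (m k t : ℕ) (hk : 2 ≤ k) (hkm : 2*k ≤ m) (ht : 2 ≤ t) (htm : 2*t ≤ m - 2) :
    Wcap K 1 t m < Wcap K k t m ∧
    Nat.card {F : Matrix (Fin m) (Fin m) K //
        IsSkewSym F ∧ F ≠ 0 ∧ affWt K m t F = Wcap K 1 t m} * (Fintype.card K ^ 2 - 1)
      = (Fintype.card K ^ m - 1) * (Fintype.card K ^ (m-1) - 1) :=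
  stmt18_general K hchar m k t hk hkm (by lia) htm
end

section
/- Let q be odd, m ≥ 4, and 2 ≤ t with 2t ≤ m - 2. For any k with 4 ≤ 2k ≤ m, the quantity w_{2k-2}(2t, m-2) = #{A skew-symmetric (m-2)×(m-2) of rank exactly 2t over F_q : tr(E_{2k-2}A) ≠ 0} satisfies w_{2k-2}(2t, m-2) ≥ (q-1)(q^{m-2t-1} - 1)(q^{m-2t} - 1) q^{m+2t-8} n_a(2t-4, m-4) > 0. -/
open Matrix
/-! A skew-symmetric matrix `A` of size `n + 1` is obtained in exactly one way by bordering a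
skew-symmetric matrix `C` of size `n` with a first row `(0, b)` and first column `(0, -b)`. Its rank
is that of `C` if `b` lies in the row space of `C`, and two more otherwise. Counting the choices of
`b` gives the recursion `na (r + 2) (n + 1) = q ^ (r + 2) na (r + 2) n + (q ^ n - q ^ r) na r n`,
from which both a two-term relation between `na r n` and `na (r + 2) n` and the identity
`q ^ (r + 1) (na (r + 2) (n + 1) - na (r + 2) n) = q ^ n (q ^ n - q ^ r) na r n` follow.

The trace of `Estd j * A` equals a constant depending on `C` minus `2 * b 0`, so for fixed `C` it
vanishes for a single value of `b 0`. Put `n = m - 4`. To bound `wSmall` from below, keep only the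
borderings of those `C` of size `n + 1` and rank `2 * t - 2` whose first row is nonzero: for these,
`b 0` is not constant on the row space of `C`, so the number of `b` outside the row space for which
`b 0` avoids one value is the same for all such `C`. There are
`na (2 * t - 2) (n + 1) - na (2 * t - 2) n` of these `C`, and the product of the two numbers is
exactly the stated bound. -/

section Matrices

variable {K : Type*} {ι κ : Type*} {m : ℕ}

lemma range_vecMulLinear_of_vecCons [CommSemiring K] (b : κ → K) (M : Matrix (Fin m) κ K) :
    LinearMap.range (of (vecCons b M)).vecMulLinear =
      LinearMap.range M.vecMulLinear ⊔ Submodule.span K {b} := by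
  rw [range_vecMulLinear, range_vecMulLinear, sup_comm, ← Submodule.span_union]
  exact congrArg _ (Matrix.range_cons b M)

variable [Field K]

lemma rank_eq_finrank_range_vecMulLinear [Fintype ι] [Fintype κ] (M : Matrix ι κ K) :
    M.rank = Module.finrank K (LinearMap.range M.vecMulLinear) := by
  rw [rank_eq_finrank_span_row, range_vecMulLinear]

lemma rank_of_vecCons_of_mem [Fintype κ] {b : κ → K} {M : Matrix (Fin m) κ K}
    (hb : b ∈ LinearMap.range M.vecMulLinear) : (of (vecCons b M)).rank = M.rank := by
  rw [rank_eq_finrank_range_vecMulLinear, rank_eq_finrank_range_vecMulLinear,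
    range_vecMulLinear_of_vecCons, sup_eq_left.2 ((Submodule.span_singleton_le_iff_mem _ _).2 hb)]

lemma rank_of_vecCons_of_notMem [Fintype κ] {b : κ → K} {M : Matrix (Fin m) κ K}
    (hb : b ∉ LinearMap.range M.vecMulLinear) : (of (vecCons b M)).rank = M.rank + 1 := by
  rw [rank_eq_finrank_range_vecMulLinear, rank_eq_finrank_range_vecMulLinear,
    range_vecMulLinear_of_vecCons, Submodule.finrank_sup_span_singleton hb]

lemma ncard_range_vecMulLinear [Finite K] [Fintype ι] [Fintype κ] (M : Matrix ι κ K) :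
    ((LinearMap.range M.vecMulLinear : Set (κ → K)).ncard : ℤ) = Nat.card K ^ M.rank := by
  rw [rank_eq_finrank_range_vecMulLinear]
  exact_mod_cast Module.natCard_eq_pow_finrank

lemma ncard_notMem_range_vecMulLinear [Finite K] [Fintype ι] (M : Matrix ι (Fin m) K) :
    ({b | b ∉ LinearMap.range M.vecMulLinear}.ncard : ℤ) =
      Nat.card K ^ m - Nat.card K ^ M.rank := by
  have h := Set.ncard_add_ncard_compl (LinearMap.range M.vecMulLinear : Set (Fin m → K))
  rw [Nat.card_fun, Nat.card_fin] at h
  rw [← ncard_range_vecMulLinear, eq_sub_iff_add_eq']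
  exact_mod_cast h

end Matrices

/-- The bordering of a matrix `C` by a vector `b`: `b` is the new first row and `-b` the new first
column, with `0` in the corner. Every skew-symmetric matrix of positive size is uniquely the
bordering of a skew-symmetric matrix. -/
def skewBorder {R : Type*} [Zero R] [Neg R] {n : ℕ} (b : Fin n → R)
    (C : Matrix (Fin n) (Fin n) R) : Matrix (Fin (n + 1)) (Fin (n + 1)) R :=
  of (vecCons (vecCons 0 b) fun i => vecCons (-b i) (C i))

section SkewBorder

variable {R : Type*} {n : ℕ}

section ZeroNeg

variable [Zero R] [Neg R]

@[simp] lemma skewBorder_zero_zero (b : Fin n → R) (C : Matrix (Fin n) (Fin n) R) :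
    skewBorder b C 0 0 = 0 := rfl

@[simp] lemma skewBorder_zero_succ (b : Fin n → R) (C : Matrix (Fin n) (Fin n) R) (j : Fin n) :
    skewBorder b C 0 j.succ = b j := rfl

@[simp] lemma skewBorder_succ_zero (b : Fin n → R) (C : Matrix (Fin n) (Fin n) R) (i : Fin n) :
    skewBorder b C i.succ 0 = -b i := rfl

@[simp] lemma skewBorder_succ_succ (b : Fin n → R) (C : Matrix (Fin n) (Fin n) R)
    (i j : Fin n) : skewBorder b C i.succ j.succ = C i j := rfl

lemma skewBorder_inj {b b' : Fin n → R} {C C' : Matrix (Fin n) (Fin n) R} :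
    skewBorder b C = skewBorder b' C' ↔ b = b' ∧ C = C' := by
  refine ⟨fun h => ⟨?_, ?_⟩, by rintro ⟨rfl, rfl⟩; rfl⟩
  · ext j
    exact congrFun₂ h 0 j.succ
  · ext i j
    exact congrFun₂ h i.succ j.succ

lemma skewBorder_eq_transpose (b : Fin n → R) (C : Matrix (Fin n) (Fin n) R) :
    skewBorder b C = (of (vecCons (vecCons 0 (-b)) (of (vecCons b C))ᵀ))ᵀ := by
  ext i j
  cases i using Fin.cases <;> cases j using Fin.cases <;> rfl

lemma ncard_exists_skewBorder_eq [Finite R]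
    {S : Set (Matrix (Fin n) (Fin n) R)} {T : Matrix (Fin n) (Fin n) R → Set (Fin n → R)} {N : ℤ}
    (hT : ∀ C ∈ S, ((T C).ncard : ℤ) = N) :
    ({A | ∃ C ∈ S, ∃ b ∈ T C, skewBorder b C = A}.ncard : ℤ) = S.ncard * N := by
  let e : (Σ C : S, T C) → {A | ∃ C ∈ S, ∃ b ∈ T C, skewBorder b C = A} :=
    fun x => ⟨skewBorder x.2 x.1, x.1, x.1.2, x.2, x.2.2, rfl⟩
  have he : e.Bijective := by
    refine ⟨?_, ?_⟩
    · rintro ⟨⟨C, hC⟩, b, hb⟩ ⟨⟨C', hC'⟩, b', hb'⟩ h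
      obtain ⟨rfl, rfl⟩ := skewBorder_inj.1 (congrArg Subtype.val h)
      rfl
    · rintro ⟨_, C, hC, b, hb, rfl⟩
      exact ⟨⟨⟨C, hC⟩, b, hb⟩, rfl⟩
  have hT' (C : S) : (Nat.card (T C) : ℤ) = N := hT C C.2
  have := Fintype.ofFinite S
  rw [← Nat.card_coe_set_eq, ← Nat.card_eq_of_bijective e he, Nat.card_sigma, Nat.cast_sum,
    Finset.sum_congr rfl fun C _ => hT' C, Finset.sum_const, nsmul_eq_mul, Finset.card_univ,
    ← Nat.card_eq_fintype_card, Nat.card_coe_set_eq]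

end ZeroNeg

lemma row_zero_skewBorder_eq_zero_iff [NegZeroClass R] {b : Fin n → R}
    {C : Matrix (Fin n) (Fin n) R} : (skewBorder b C).row 0 = 0 ↔ b = 0 := by
  simp [funext_iff, Fin.forall_fin_succ, row]

section CommRing

variable [CommRing R]

lemma skewBorder_mulVec_vecCons (b : Fin n → R) (C : Matrix (Fin n) (Fin n) R) (y : R)
    (x : Fin n → R) :
    skewBorder b C *ᵥ vecCons y x = vecCons (b ⬝ᵥ x) (C *ᵥ x - y • b) := by
  ext i
  cases i using Fin.cases with
  | zero => simp [mulVec, dotProduct, Fin.sum_univ_succ]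
  | succ i =>
    simp only [mulVec, dotProduct, Fin.sum_univ_succ, skewBorder_succ_zero, skewBorder_succ_succ,
      cons_val_zero, cons_val_succ, Pi.sub_apply, Pi.smul_apply, smul_eq_mul]
    ring

lemma trace_mul_skewBorder (M : Matrix (Fin (n + 1)) (Fin (n + 1)) R) (b : Fin n → R)
    (C : Matrix (Fin n) (Fin n) R) :
    trace (M * skewBorder b C) = trace (M.submatrix Fin.succ Fin.succ * C) +
      (fun i => M i.succ 0 - M 0 i.succ) ⬝ᵥ b := by
  simp only [trace, diag, mul_apply, Fin.sum_univ_succ, skewBorder_zero_zero,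
    skewBorder_zero_succ, skewBorder_succ_zero, skewBorder_succ_succ, submatrix_apply,
    Finset.sum_add_distrib, dotProduct, sub_mul, Finset.sum_sub_distrib, mul_neg,
    Finset.sum_neg_distrib]
  ring

end CommRing

end SkewBorder

section IsSkewSym

variable {K : Type} [Field K] {n : ℕ}

lemma IsSkewSym.apply_swap {A : Matrix (Fin n) (Fin n) K} (hA : IsSkewSym A) (i j : Fin n) :
    A j i = -A i j :=
  congrFun₂ hA.1 i j

lemma isSkewSym_skewBorder {b : Fin n → K} {C : Matrix (Fin n) (Fin n) K} (hC : IsSkewSym C) :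
    IsSkewSym (skewBorder b C) := by
  refine ⟨?_, Fin.cases rfl hC.2⟩
  ext i j
  cases i using Fin.cases <;> cases j using Fin.cases
  case succ.succ i j => exact hC.apply_swap i j
  all_goals simp

lemma IsSkewSym.exists_skewBorder_eq {A : Matrix (Fin (n + 1)) (Fin (n + 1)) K}
    (hA : IsSkewSym A) : ∃ b C, IsSkewSym C ∧ skewBorder b C = A := by
  refine ⟨fun j => A 0 j.succ, A.submatrix Fin.succ Fin.succ,
    ⟨Matrix.ext fun i j => hA.apply_swap i.succ j.succ, fun i => hA.2 i.succ⟩, ?_⟩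
  ext i j
  cases i using Fin.cases <;> cases j using Fin.cases <;> simp [hA.2, hA.apply_swap 0]

lemma IsSkewSym.vecMul_eq_neg_mulVec {C : Matrix (Fin n) (Fin n) K} (hC : IsSkewSym C)
    (x : Fin n → K) : x ᵥ* C = -(C *ᵥ x) := by
  rw [← mulVec_transpose, hC.1, neg_mulVec]

lemma IsSkewSym.dotProduct_mulVec_self {C : Matrix (Fin n) (Fin n) K} (hC : IsSkewSym C)
    (v : Fin n → K) : v ⬝ᵥ C *ᵥ v = 0 := by
  induction n with
  | zero => exact Finset.sum_empty
  | succ n ih =>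
    obtain ⟨b, D, hD, rfl⟩ := hC.exists_skewBorder_eq
    obtain ⟨y, x, rfl⟩ : ∃ y x, vecCons y x = v := ⟨vecHead v, vecTail v, cons_head_tail v⟩
    rw [skewBorder_mulVec_vecCons, cons_dotProduct_cons, dotProduct_sub, ih hD, dotProduct_smul,
      dotProduct_comm, smul_eq_mul, zero_sub, add_neg_cancel]

lemma IsSkewSym.vecCons_neg_mem_range_iff {C : Matrix (Fin n) (Fin n) K} (hC : IsSkewSym C)
    {b : Fin n → K} : vecCons 0 (-b) ∈ LinearMap.range (of (vecCons b C))ᵀ.vecMulLinear ↔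
      b ∈ LinearMap.range C.vecMulLinear := by
  simp only [LinearMap.mem_range, vecMulLinear_apply, vecMul_transpose, hC.vecMul_eq_neg_mulVec]
  refine exists_congr fun x => ?_
  have hcons : of (vecCons b C) *ᵥ x = vecCons (b ⬝ᵥ x) (C *ᵥ x) := cons_mulVec b C x
  rw [hcons, vecCons_inj, neg_eq_iff_eq_neg, and_iff_right_iff_imp]
  intro hx
  rw [← neg_eq_iff_eq_neg.2 hx, neg_dotProduct, dotProduct_comm, hC.dotProduct_mulVec_self,
    neg_zero]

lemma IsSkewSym.rank_skewBorder_of_mem {C : Matrix (Fin n) (Fin n) K} (hC : IsSkewSym C)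
    {b : Fin n → K} (hb : b ∈ LinearMap.range C.vecMulLinear) :
    (skewBorder b C).rank = C.rank := by
  rw [skewBorder_eq_transpose, rank_transpose,
    rank_of_vecCons_of_mem (hC.vecCons_neg_mem_range_iff.2 hb), rank_transpose,
    rank_of_vecCons_of_mem hb]

lemma IsSkewSym.rank_skewBorder_of_notMem {C : Matrix (Fin n) (Fin n) K} (hC : IsSkewSym C)
    {b : Fin n → K} (hb : b ∉ LinearMap.range C.vecMulLinear) :
    (skewBorder b C).rank = C.rank + 2 := by
  rw [skewBorder_eq_transpose, rank_transpose,
    rank_of_vecCons_of_notMem (mt hC.vecCons_neg_mem_range_iff.1 hb), rank_transpose,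
    rank_of_vecCons_of_notMem hb]

lemma IsSkewSym.even_rank {A : Matrix (Fin n) (Fin n) K} (hA : IsSkewSym A) : Even A.rank := by
  induction n with
  | zero => simp [Subsingleton.elim A 0]
  | succ n ih =>
    obtain ⟨b, C, hC, rfl⟩ := hA.exists_skewBorder_eq
    by_cases hb : b ∈ LinearMap.range C.vecMulLinear
    · simpa only [hC.rank_skewBorder_of_mem hb] using ih hC
    · simpa only [hC.rank_skewBorder_of_notMem hb] using (ih hC).add even_two

lemma trace_Estd_mul_skewBorder {j : ℕ} (hj : 1 ≤ j) (b : Fin (n + 1) → K)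
    (C : Matrix (Fin (n + 1)) (Fin (n + 1)) K) :
    trace (Estd K j (n + 2) * skewBorder b C) =
      trace ((Estd K j (n + 2)).submatrix Fin.succ Fin.succ * C) - 2 * b 0 := by
  have hrow : (fun i : Fin (n + 1) => Estd K j (n + 2) i.succ 0 - Estd K j (n + 2) 0 i.succ) =
      Pi.single 0 (-2) := by
    ext i
    cases i using Fin.cases with
    | zero =>
      have h1 : 1 < 2 * j := by omega
      norm_num [Estd, h1]
    | succ i => simp [Estd]
  rw [trace_mul_skewBorder, hrow, single_dotProduct, neg_mul, sub_eq_add_neg]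

end IsSkewSym

section LinearFunctional

variable {K V : Type*} [DivisionRing K] [AddCommGroup V] [Module K V] [Finite V]

lemma ncard_apply_ne {f : V →ₗ[K] K} (hf : f ≠ 0) {d : ℕ} (hd : Module.finrank K V = d + 1)
    (c : K) :
    ({x | f x ≠ c}.ncard : ℤ) = (Nat.card K - 1) * Nat.card K ^ d := by
  obtain ⟨x₀, rfl⟩ := LinearMap.surjective hf c
  have hker : Module.finrank K (LinearMap.ker f) = d := by
    have h := f.finrank_range_add_finrank_ker
    rw [LinearMap.range_eq_top.2 (LinearMap.surjective hf), finrank_top, Module.finrank_self] at h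
    omega
  have hfiber : {x | f x = f x₀} = (· + x₀) '' (LinearMap.ker f : Set V) := by
    ext x
    simp [← sub_eq_add_neg, sub_eq_zero]
  have hcard : {x | f x = f x₀}.ncard = Nat.card K ^ d := by
    rw [hfiber, Set.ncard_image_of_injective _ (add_left_injective x₀), ← hker]
    exact Module.natCard_eq_pow_finrank
  have h := Set.ncard_add_ncard_compl {x | f x = f x₀}
  rw [hcard, Module.natCard_eq_pow_finrank (K := K) (V := V), hd] at h
  change (({x | f x = f x₀}ᶜ).ncard : ℤ) = _
  zify at h
  linear_combination h

lemma ncard_notMem_and_apply_ne {f : V →ₗ[K] K} {U : Submodule K V}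
    (hf : f.domRestrict U ≠ 0) {d e : ℕ} (hd : Module.finrank K V = d + 1)
    (he : Module.finrank K U = e + 1) (c : K) :
    ({x | x ∉ U ∧ f x ≠ c}.ncard : ℤ) = (Nat.card K - 1) * (Nat.card K ^ d - Nat.card K ^ e) := by
  have hf0 : f ≠ 0 := by
    rintro rfl
    exact hf rfl
  have hmem : {x | f x ≠ c} ∩ U = Subtype.val '' {x | f.domRestrict U x ≠ c} := by
    ext x
    simp [and_comm]
  have hdiff : {x | x ∉ U ∧ f x ≠ c} = {x | f x ≠ c} \ U := by
    ext x
    simp [and_comm]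
  have h := Set.ncard_inter_add_ncard_sdiff_eq_ncard {x | f x ≠ c} (U : Set V)
  rw [hmem, Set.ncard_image_of_injective _ Subtype.val_injective, ← hdiff] at h
  zify at h
  rw [ncard_apply_ne hf he, ncard_apply_ne hf0 hd] at h
  linear_combination h

end LinearFunctional

section Count

variable {K : Type} [Field K] {n : ℕ}

local notation "q" => (Nat.card K : ℤ)

lemma na_eq_ncard (r : ℕ) :
    na K r n = {A : Matrix (Fin n) (Fin n) K | IsSkewSym A ∧ A.rank = r}.ncard :=
  rfl

lemma na_zero (n : ℕ) : na K 0 n = 1 := by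
  rw [na_eq_ncard, Set.ncard_eq_one]
  refine ⟨0, Set.eq_singleton_iff_unique_mem.2 ⟨by simp [IsSkewSym], fun A hA => ?_⟩⟩
  have hrange := Submodule.finrank_eq_zero.1 hA.2
  exact toLin'.map_eq_zero_iff.1 (LinearMap.range_eq_bot.1 hrange)

lemma na_eq_zero_of_odd {r : ℕ} (hr : Odd r) : na K r n = 0 := by
  rw [na, Nat.card_eq_zero]
  refine Or.inl ⟨?_⟩
  rintro ⟨A, hA, rfl⟩
  exact Nat.not_even_iff_odd.2 hr hA.even_rank

lemma na_eq_zero_of_lt {r : ℕ} (h : n < r) : na K r n = 0 := by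
  rw [na, Nat.card_eq_zero]
  refine Or.inl ⟨?_⟩
  rintro ⟨A, -, rfl⟩
  exact h.not_ge A.rank_le_width

lemma setOf_isSkewSym_rank_eq_add_two (r n : ℕ) :
    {A : Matrix (Fin (n + 1)) (Fin (n + 1)) K | IsSkewSym A ∧ A.rank = r + 2} =
      {A | ∃ C ∈ {C | IsSkewSym C ∧ C.rank = r + 2},
        ∃ b ∈ (LinearMap.range C.vecMulLinear : Set _), skewBorder b C = A} ∪
      {A | ∃ C ∈ {C | IsSkewSym C ∧ C.rank = r},
        ∃ b ∈ {b | b ∉ LinearMap.range C.vecMulLinear}, skewBorder b C = A} := by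
  ext A
  constructor
  · rintro ⟨hA, hr⟩
    obtain ⟨b, C, hC, rfl⟩ := hA.exists_skewBorder_eq
    by_cases hb : b ∈ LinearMap.range C.vecMulLinear
    · rw [hC.rank_skewBorder_of_mem hb] at hr
      exact Or.inl ⟨C, ⟨hC, hr⟩, b, hb, rfl⟩
    · rw [hC.rank_skewBorder_of_notMem hb, Nat.add_right_cancel_iff] at hr
      exact Or.inr ⟨C, ⟨hC, hr⟩, b, hb, rfl⟩
  · rintro (⟨C, ⟨hC, hr⟩, b, hb, rfl⟩ | ⟨C, ⟨hC, hr⟩, b, hb, rfl⟩)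
    · exact ⟨isSkewSym_skewBorder hC, (hC.rank_skewBorder_of_mem hb).trans hr⟩
    · exact ⟨isSkewSym_skewBorder hC, by rw [hC.rank_skewBorder_of_notMem hb, hr]⟩

lemma ncard_row_zero_eq_zero (r n : ℕ) :
    {A : Matrix (Fin (n + 1)) (Fin (n + 1)) K |
      IsSkewSym A ∧ A.rank = r ∧ A.row 0 = 0}.ncard = na K r n := by
  rw [na_eq_ncard, ← Set.ncard_image_of_injective {C | IsSkewSym C ∧ C.rank = r} (f := skewBorder 0)
    fun C C' h => (skewBorder_inj.1 h).2]
  have hrank {C : Matrix (Fin n) (Fin n) K} (hC : IsSkewSym C) :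
      (skewBorder 0 C).rank = C.rank := hC.rank_skewBorder_of_mem (Submodule.zero_mem _)
  refine congrArg Set.ncard (Set.ext fun A => ⟨?_, ?_⟩)
  · rintro ⟨hA, hr, h0⟩
    obtain ⟨b, C, hC, rfl⟩ := hA.exists_skewBorder_eq
    rw [row_zero_skewBorder_eq_zero_iff] at h0
    subst h0
    exact ⟨C, ⟨hC, (hrank hC).symm.trans hr⟩, rfl⟩
  · rintro ⟨C, ⟨hC, hr⟩, rfl⟩
    exact ⟨isSkewSym_skewBorder hC, (hrank hC).trans hr, row_zero_skewBorder_eq_zero_iff.2 rfl⟩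

variable [Finite K]

lemma na_add_two_succ (r n : ℕ) :
    (na K (r + 2) (n + 1) : ℤ) =
      q ^ (r + 2) * na K (r + 2) n + (q ^ n - q ^ r) * na K r n := by
  rw [na_eq_ncard, setOf_isSkewSym_rank_eq_add_two, Set.ncard_union_eq, Nat.cast_add,
    ncard_exists_skewBorder_eq (N := q ^ (r + 2)), ncard_exists_skewBorder_eq (N := q ^ n - q ^ r),
    ← na_eq_ncard, ← na_eq_ncard, mul_comm, mul_comm (na K r n : ℤ)]
  · rintro C ⟨-, rfl⟩
    exact ncard_notMem_range_vecMulLinear C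
  · rintro C ⟨-, hr⟩
    rw [ncard_range_vecMulLinear, hr]
  · rw [Set.disjoint_left]
    rintro _ ⟨C, -, b, hb, rfl⟩ ⟨C', -, b', hb', h⟩
    obtain ⟨rfl, rfl⟩ := skewBorder_inj.1 h
    exact hb' hb

lemma mul_na_eq_mul_na_add_two (r n : ℕ) :
    (q ^ n - q ^ r) * (q ^ n - q ^ (r + 1)) * na K r n =
      q ^ (r + 1) * (q ^ (r + 2) - 1) * na K (r + 2) n := by
  induction n generalizing r with
  | zero =>
    rw [na_eq_zero_of_lt (by omega : 0 < r + 2)]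
    rcases r.eq_zero_or_pos with rfl | hr
    · simp
    · simp [na_eq_zero_of_lt hr]
  | succ n ih =>
    have h := ih r
    rw [na_add_two_succ]
    match r with
    | 0 =>
      simp only [na_zero] at h ⊢
      linear_combination q ^ 2 * h
    | 1 =>
      simp only [na_eq_zero_of_odd odd_one] at h ⊢
      linear_combination q ^ 3 * h
    | r + 2 =>
      rw [na_add_two_succ]
      linear_combination q ^ (r + 4) * h + q ^ 2 * (q ^ n - q ^ (r + 2)) * ih r

lemma mul_na_succ_sub_na (r n : ℕ) :
    q ^ (r + 1) * (na K (r + 2) (n + 1) - na K (r + 2) n) = q ^ n * (q ^ n - q ^ r) * na K r n := by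
  rw [na_add_two_succ]
  linear_combination -mul_na_eq_mul_na_add_two (K := K) r n

lemma na_pos {r : ℕ} (hr : Even r) (h : r ≤ n) : 0 < na K r n := by
  induction n generalizing r with
  | zero => simp [Nat.le_zero.1 h, na_zero]
  | succ n ih =>
    match r with
    | 0 => simp [na_zero]
    | 1 => exact absurd hr Nat.not_even_one
    | r + 2 =>
      have hq : 1 < q := by exact_mod_cast Finite.one_lt_card (α := K)
      have hpow : q ^ r < q ^ n := pow_lt_pow_right₀ hq (by omega)
      have hprev : 0 < na K r n := ih (by simpa [Nat.even_add] using hr) (by omega)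
      zify at hprev ⊢
      rw [na_add_two_succ]
      exact add_pos_of_nonneg_of_pos (by positivity) (mul_pos (sub_pos.2 hpow) hprev)

lemma ncard_row_zero_ne_zero (r n : ℕ) :
    ({A : Matrix (Fin (n + 1)) (Fin (n + 1)) K |
      IsSkewSym A ∧ A.rank = r ∧ A.row 0 ≠ 0}.ncard : ℤ) = na K r (n + 1) - na K r n := by
  have h := Set.ncard_inter_add_ncard_sdiff_eq_ncard
    {A : Matrix (Fin (n + 1)) (Fin (n + 1)) K | IsSkewSym A ∧ A.rank = r} {A | A.row 0 = 0}
  rw [eq_sub_iff_add_eq', ← ncard_row_zero_eq_zero, na_eq_ncard, ← h, Nat.cast_add]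
  simp only [← and_assoc]
  rfl

lemma ncard_notMem_range_and_apply_zero_ne {C : Matrix (Fin (n + 1)) (Fin (n + 1)) K}
    (hC : IsSkewSym C) (h0 : C.row 0 ≠ 0) {r : ℕ} (hr : C.rank = r + 1) (c : K) :
    ({b | b ∉ LinearMap.range C.vecMulLinear ∧ b 0 ≠ c}.ncard : ℤ) =
      (q - 1) * (q ^ n - q ^ r) := by
  refine ncard_notMem_and_apply_ne (f := LinearMap.proj (φ := fun _ => K) 0) (fun hf => h0 ?_)
    (by simp) (by rw [← rank_eq_finrank_range_vecMulLinear, hr]) c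
  ext i
  have hrow := LinearMap.congr_fun hf ⟨Pi.single i 1 ᵥ* C, Pi.single i 1, rfl⟩
  simpa [hC.apply_swap 0] using hrow

lemma le_ncard_rank_and_apply_ne (c : Matrix (Fin (n + 1)) (Fin (n + 1)) K → K) (r : ℕ) :
    (q - 1) * (q ^ n - q ^ (r + 1)) * (na K (r + 2) (n + 1) - na K (r + 2) n) ≤
      {A : Matrix (Fin (n + 2)) (Fin (n + 2)) K | IsSkewSym A ∧ A.rank = r + 4 ∧
        A 0 1 ≠ c (A.submatrix Fin.succ Fin.succ)}.ncard := by
  rw [← ncard_row_zero_ne_zero, mul_comm, ← ncard_exists_skewBorder_eq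
    (T := fun C => {b | b ∉ LinearMap.range C.vecMulLinear ∧ b 0 ≠ c C})
    fun C hC => ncard_notMem_range_and_apply_zero_ne hC.1 hC.2.2 hC.2.1 (c C)]
  refine Nat.cast_le.2 (Set.ncard_le_ncard ?_)
  rintro _ ⟨C, ⟨hC, hr, -⟩, b, ⟨hb, hbc⟩, rfl⟩
  exact ⟨isSkewSym_skewBorder hC, by rw [hC.rank_skewBorder_of_notMem hb, hr], hbc⟩

lemma le_wSmall (h2 : (2 : K) ≠ 0) {j : ℕ} (hj : 1 ≤ j) (s n : ℕ) :
    (q - 1) * (q ^ n - q ^ (2 * s + 1)) * (na K (2 * s + 2) (n + 1) - na K (2 * s + 2) n) ≤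
      wSmall K j (s + 2) (n + 2) := by
  refine (le_ncard_rank_and_apply_ne (n := n)
    (fun C => trace ((Estd K j (n + 2)).submatrix Fin.succ Fin.succ * C) / 2) (2 * s)).trans_eq ?_
  congr 2
  ext A
  refine and_congr_right fun hA => and_congr_right fun _ => ?_
  obtain ⟨b, C, -, rfl⟩ := hA.exists_skewBorder_eq
  rw [trace_Estd_mul_skewBorder hj, sub_ne_zero]
  change b 0 ≠ trace (_ * C) / 2 ↔ _
  rw [ne_comm, ne_eq, ne_eq, div_eq_iff h2, mul_comm 2]

lemma wSmall_lower_bound (h2 : (2 : K) ≠ 0) {j : ℕ} (hj : 1 ≤ j) (s d : ℕ) :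
    (q - 1) * (q ^ (d + 1) - 1) * (q ^ (d + 2) - 1) * q ^ (4 * s + 2 + d) *
        na K (2 * s) (2 * s + 2 + d) ≤
      wSmall K j (s + 2) (2 * s + 2 + d + 2) := by
  refine (le_wSmall h2 hj s (2 * s + 2 + d)).trans_eq' ?_
  have h := mul_na_succ_sub_na (K := K) (2 * s) (2 * s + 2 + d)
  have hq : q ≠ 0 := by exact_mod_cast (Finite.card_pos (α := K)).ne'
  refine mul_left_cancel₀ (pow_ne_zero (2 * s + 1) hq) ?_
  linear_combination (q - 1) * (q ^ (2 * s + 2 + d) - q ^ (2 * s + 1)) * h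

end Count

theorem stmt19 (K : Type) [Field K] [Fintype K] (hchar : ringChar K ≠ 2)
    (m t k : ℕ) (hm : 4 ≤ m) (ht : 2 ≤ t) (htm : 2*t ≤ m - 2)
    (hk : 2 ≤ k) (hkm : 2*k ≤ m) :
    (Fintype.card K - 1) * (Fintype.card K ^ (m - 2*t - 1) - 1)
        * (Fintype.card K ^ (m - 2*t) - 1) * Fintype.card K ^ (m + 2*t - 8)
        * na K (2*t - 4) (m - 4) ≤ wSmall K (k-1) t (m-2)
      ∧ 0 < wSmall K (k-1) t (m-2) := by
  obtain ⟨s, rfl⟩ : ∃ s, t = s + 2 := ⟨t - 2, by omega⟩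
  obtain ⟨d, rfl⟩ : ∃ d, m = 2 * s + 2 + d + 4 := ⟨m - (2 * s + 6), by omega⟩
  have hw := wSmall_lower_bound (Ring.two_ne_zero hchar) (j := k - 1) (by omega) s d
  have hna := na_pos (K := K) (even_two_mul s) (show 2 * s ≤ 2 * s + 2 + d by omega)
  have hq : 1 < Fintype.card K := Fintype.one_lt_card
  have hpow (e : ℕ) : 1 < Fintype.card K ^ (e + 1) := Nat.one_lt_pow e.succ_ne_zero hq
  rw [show 2 * s + 2 + d + 4 - 2 * (s + 2) - 1 = d + 1 by omega,
    show 2 * s + 2 + d + 4 - 2 * (s + 2) = d + 2 by omega,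
    show 2 * s + 2 + d + 4 + 2 * (s + 2) - 8 = 4 * s + 2 + d by omega,
    show 2 * (s + 2) - 4 = 2 * s by omega, Nat.add_sub_cancel, Nat.add_sub_add_right _ 2]
  refine (and_iff_left_of_imp fun hle => hle.trans_lt' ?_).2 ?_
  · rw [Nat.card_eq_fintype_card] at hw
    zify [hq.le, (hpow d).le, (hpow (d + 1)).le]
    exact hw
  · have hq' := Nat.sub_pos_of_lt hq
    have hd := Nat.sub_pos_of_lt (hpow d)
    have hd' := Nat.sub_pos_of_lt (hpow (d + 1))
    positivity
end
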